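/- Fix c > 2. For all sufficiently large n (depending on c), for every ε with c log log n / log n < ε < 1/2, and for every fixed path P = (v_1,…,v_{k+1}) in K_n with 1 ≤ k ≤ 12 log n: conditionally on the event { (1−2ε) log n ≤ w(P) ≤ (1−ε) log n }, the probability that P is not the minimum-weight path from v_1 to v_{k+1} (i.e., that there exists a path Q ≠ P from v_1 to v_{k+1} with w(Q) ≤ w(P)) is at most 13 k² / n^{ε}. -/

import Mathlib

/-!
A competitor `Q ≠ P` of weight at most `w(P) ≤ x := (1 - ε) log n` must leave `P`. Since a path is
determined by its edges (`isPath_eq_of_edges_subset`), `Q` uses an edge outside `P`, and hence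
contains a nonempty excursion: a subpath between two vertices of `P` that shares no edge with `P`
(`exists_excursion`). As the weights are almost surely nonnegative, this excursion also has weight
at most `x`.

The weight of a path that is edge-disjoint from `P` is independent of `w(P)`, so the conditioning
does not affect it (`cond_walkWeight_le`). A path with `m` edges has weight at most `x` with
probability at most `(x / n) ^ m / m!` (`pi_expMeasure_sum_le`), and at most `n ^ (m - 1)` such paths
join two given vertices (`card_finsetWalkLength_le`). Summing over `m ≥ 1` bounds the probability
of a light excursion between two given vertices by `exp x / n = n ^ (-ε)`. A union bound over
the `(k + 1) ^ 2 ≤ 4 k ^ 2` ordered pairs of vertices of `P` gives the claim. The argument is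
uniform in `n`, so the threshold on `n` can be taken to be `0`.
-/

open MeasureTheory ProbabilityTheory Real Filter

/-- The complete graph on `n` vertices. -/
def Kn (n : ℕ) : SimpleGraph (Fin n) := ⊤

/-- The canonical probability space for i.i.d. `Exp(mean n)` edge weights on `K_n`:
weights are indexed by `Sym2 (Fin n)` and each coordinate has the exponential
distribution with rate `1/n` (mean `n`). -/
noncomputable def edgeSpace (n : ℕ) : Measure (Sym2 (Fin n) → ℝ) :=
  haveI : ∀ _e : Sym2 (Fin n), SigmaFinite (expMeasure (1 / (n : ℝ))) := fun _e =>
    SigmaFinite.withDensity_of_ne_top' (fun _x => ENNReal.ofReal_ne_top)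
  Measure.pi (fun _e : Sym2 (Fin n) => expMeasure (1 / (n : ℝ)))

/-- The weight of a walk: the sum of the weights of its edges. -/
noncomputable def walkWeight {n : ℕ} (w : Sym2 (Fin n) → ℝ) {i j : Fin n}
    (p : (Kn n).Walk i j) : ℝ := (p.edges.map w).sum

/-- `p` is a minimum-weight path from `i` to `j`. -/
def IsMinPath {n : ℕ} (w : Sym2 (Fin n) → ℝ) {i j : Fin n} (p : (Kn n).Walk i j) : Prop :=
  p.IsPath ∧ ∀ q : (Kn n).Walk i j, q.IsPath → walkWeight w p ≤ walkWeight w q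

/-- `max_{1 ≤ i,j ≤ n} |P_{ij}|` : the largest number of edges of any
minimum-weight path between a pair of vertices. -/
noncomputable def maxMinLen {n : ℕ} (w : Sym2 (Fin n) → ℝ) : ℕ :=
  sSup {L : ℕ | ∃ (i j : Fin n) (p : (Kn n).Walk i j), IsMinPath w p ∧ p.length = L}

/-! ### Sums of independent exponential variables -/

lemma expMeasure_ae_nonneg (r : ℝ) : ∀ᵐ t ∂(expMeasure r), 0 ≤ t := by
  rw [expMeasure, gammaMeasure, ae_iff, withDensity_apply _ (by measurability)]
  have : {a : ℝ | ¬ 0 ≤ a} = Set.Iio 0 := by ext; simp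
  rw [this]
  exact lintegral_gammaPDF_of_nonpos le_rfl

lemma pi_expMeasure_ae_nonneg {ι : Type*} [Fintype ι] {r : ℝ} (hr : 0 < r) :
    ∀ᵐ w ∂(Measure.pi fun _ : ι => expMeasure r), ∀ e, 0 ≤ w e := by
  have := isProbabilityMeasure_expMeasure hr
  rw [ae_all_iff]
  intro e
  exact (measurePreserving_eval (fun _ : ι => expMeasure r) e).quasiMeasurePreserving.ae
    (expMeasure_ae_nonneg r)

lemma iIndepFun_pi_expMeasure {ι : Type*} [Fintype ι] {r : ℝ} (hr : 0 < r) :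
    iIndepFun (fun (e : ι) (w : ι → ℝ) => w e) (Measure.pi fun _ : ι => expMeasure r) := by
  have := isProbabilityMeasure_expMeasure hr
  exact iIndepFun_pi (X := fun _ => id) (fun _ => aemeasurable_id)

lemma integral_simplex_step (r x : ℝ) (m : ℕ) :
    ∫ t in (0 : ℝ)..x, r * ((r * (x - t)) ^ m / m.factorial)
      = (r * x) ^ (m + 1) / (m + 1).factorial := by
  rw [intervalIntegral.integral_comp_sub_left (fun t => r * ((r * t) ^ m / m.factorial))]
  simp only [mul_pow, sub_self, sub_zero, intervalIntegral.integral_const_mul,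
    intervalIntegral.integral_div, integral_pow, Nat.factorial_succ]
  push_cast
  have : (m.factorial : ℝ) ≠ 0 := by positivity
  field_simp
  simp only [zero_pow (Nat.succ_ne_zero m), sub_zero]
  ring

/-- The sum of `m` independent exponential variables of rate `r` is at most `x` with probability
at most `(r x) ^ m / m!`: the joint density is at most `r ^ m`, and the simplex
`{t ≥ 0, ∑ t ≤ x}` has volume `x ^ m / m!`. -/
lemma pi_expMeasure_sum_le {ι : Type*} [Fintype ι] {r : ℝ} (hr : 0 < r) (S : Finset ι) :
    ∀ x : ℝ, 0 ≤ x → (Measure.pi fun _ : ι => expMeasure r) {w | ∑ e ∈ S, w e ≤ x}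
      ≤ ENNReal.ofReal ((r * x) ^ S.card / S.card.factorial) := by
  classical
  have := isProbabilityMeasure_expMeasure hr
  induction S using Finset.induction_on with
  | empty => intro x _; simpa using prob_le_one
  | insert a S ha ih =>
    intro x hx
    set μ := Measure.pi fun _ : ι => expMeasure r with hμ
    set Y : (ι → ℝ) → ℝ := fun w => ∑ e ∈ S, w e with hY
    have hYm : Measurable Y := by fun_prop
    have hind : IndepFun (fun w : ι → ℝ => w a) Y μ := by
      have h := (iIndepFun_pi_expMeasure (ι := ι) hr).indepFun_finsetSum_of_notMem
        (fun i => measurable_pi_apply i) ha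
      have e : (∑ j ∈ S, fun w : ι → ℝ => w j) = Y := by ext; simp [hY]
      rw [e] at h
      exact h.symm
    have hmap := (indepFun_iff_map_prod_eq_prod_map_map
      (measurable_pi_apply a).aemeasurable hYm.aemeasurable).1 hind
    have hev : μ.map (fun w : ι → ℝ => w a) = expMeasure r :=
      (measurePreserving_eval (fun _ : ι => expMeasure r) a).map_eq
    rw [hev] at hmap
    have hms : MeasurableSet {p : ℝ × ℝ | p.1 + p.2 ≤ x} :=
      measurableSet_le (by fun_prop) measurable_const
    have hYprob : IsProbabilityMeasure (μ.map Y) :=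
      Measure.isProbabilityMeasure_map hYm.aemeasurable
    have h1 : μ {w | ∑ e ∈ insert a S, w e ≤ x}
        = ∫⁻ t, μ {w | Y w ≤ x - t} ∂(expMeasure r) := by
      have h0 : {w : ι → ℝ | ∑ e ∈ insert a S, w e ≤ x}
          = (fun w => (w a, Y w)) ⁻¹' {p : ℝ × ℝ | p.1 + p.2 ≤ x} := by
        ext w; simp [Finset.sum_insert ha, hY]
      rw [h0, ← Measure.map_apply (by fun_prop) hms, hmap, Measure.prod_apply hms]
      refine lintegral_congr fun t => ?_
      rw [Measure.map_apply hYm (measurable_prodMk_left hms)]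
      congr 1
      ext w
      simp [le_sub_iff_add_le']
    have hanti : Antitone fun t : ℝ => μ {w | Y w ≤ x - t} := by
      intro s t hst
      refine measure_mono fun w hw => ?_
      simp only [Set.mem_ofPred_eq] at hw ⊢
      linarith
    have hneg : ∀ t, x < t → μ {w | Y w ≤ x - t} = 0 := by
      intro t ht
      refine measure_mono_null ?_ (pi_expMeasure_ae_nonneg (ι := ι) hr)
      intro w hw
      simp only [Set.mem_ofPred_eq, Set.mem_compl_iff] at hw ⊢
      intro h
      have : 0 ≤ Y w := Finset.sum_nonneg fun e _ => h e
      linarith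
    rw [h1, expMeasure, gammaMeasure, lintegral_withDensity_eq_lintegral_mul _
      (by unfold gammaPDF; fun_prop) hanti.measurable]
    set m := S.card with hm
    -- Bound the density by `r` on `(0, x]`; the integrand vanishes almost everywhere outside.
    calc ∫⁻ t, (gammaPDF 1 r * fun t => μ {w | Y w ≤ x - t}) t
        ≤ ∫⁻ t, (Set.Ioc 0 x).indicator
            (fun t => ENNReal.ofReal (r * ((r * (x - t)) ^ m / m.factorial))) t := by
          refine lintegral_mono_ae ?_
          filter_upwards [(measure_eq_zero_iff_ae_notMem (s := {(0 : ℝ)})).1 (by simp)] with t ht0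
          have ht0 : t ≠ 0 := by simpa using ht0
          simp only [Pi.mul_apply]
          rcases lt_or_gt_of_ne ht0 with h | h
          · simp [gammaPDF_of_neg h]
          by_cases hxt : t ≤ x
          · rw [Set.indicator_of_mem (show t ∈ Set.Ioc 0 x from ⟨h, hxt⟩),
              ENNReal.ofReal_mul hr.le]
            refine mul_le_mul' ?_ (ih _ (by linarith))
            rw [gammaPDF_of_nonneg h.le]
            refine ENNReal.ofReal_le_ofReal ?_
            have : Real.exp (-(r * t)) ≤ 1 := Real.exp_le_one_iff.2 (by nlinarith)
            simp
            nlinarith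
          · simp [hneg t (not_le.1 hxt)]
      _ = ∫⁻ t in Set.Ioc 0 x, ENNReal.ofReal (r * ((r * (x - t)) ^ m / m.factorial)) :=
          lintegral_indicator measurableSet_Ioc _
      _ = ENNReal.ofReal (∫ t in Set.Ioc 0 x, r * ((r * (x - t)) ^ m / m.factorial)) := by
          refine (ofReal_integral_eq_lintegral_ofReal ?_ ?_).symm
          · exact ((by fun_prop : Continuous fun t : ℝ =>
              r * ((r * (x - t)) ^ m / m.factorial)).integrableOn_Icc (a := 0) (b := x)).mono_set
              Set.Ioc_subset_Icc_self
          · refine (ae_restrict_iff' measurableSet_Ioc).2 (Eventually.of_forall fun t ht => ?_)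
            have : 0 ≤ x - t := by linarith [ht.2]
            simp only [Pi.zero_apply]
            positivity
      _ ≤ _ := by
          rw [← intervalIntegral.integral_of_le hx, integral_simplex_step,
            Finset.card_insert_of_notMem ha]

/-! ### Excursions of a path from another path -/

/-- A path contains no other path between its own endpoints. -/
lemma isPath_eq_of_edges_subset {V : Type*} {G : SimpleGraph V} {u v : V} (p q : G.Walk u v)
    (hp : p.IsPath) (hq : q.IsPath) (h : ∀ e ∈ q.edges, e ∈ p.edges) : q = p := by
  induction p with
  | nil => simpa using hq
  | @cons u w v hadj p ih =>
    rw [SimpleGraph.Walk.cons_isPath_iff] at hp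
    cases q with
    | nil => exact absurd p.end_mem_support hp.2
    | @cons _ w' _ hadj' q =>
      rw [SimpleGraph.Walk.cons_isPath_iff] at hq
      have h1 : s(u, w') ∈ s(u, w) :: p.edges := by simpa using h s(u, w') (by simp)
      rcases List.mem_cons.1 h1 with h1 | h1
      · obtain rfl : w' = w := Sym2.congr_right.1 h1
        congr 1
        refine ih q hp.1 hq.1 fun e he => ?_
        have h2 : e ∈ s(u, w') :: p.edges := by simpa using h e (by simp [he])
        rcases List.mem_cons.1 h2 with rfl | h2
        · exact absurd (q.fst_mem_support_of_mem_edges he) hq.2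
        · exact h2
      · exact absurd (p.fst_mem_support_of_mem_edges h1) hp.2

/-- The initial segment of `q` up to its first visit to `H` uses no edge of `F`, because all edges
of `F` have their endpoints in `H`. It is empty if `q` starts in `H`. -/
lemma exists_first_return {V : Type*} {G : SimpleGraph V} (H : Set V) (F : Set (Sym2 V))
    (hF : ∀ x y, s(x, y) ∈ F → x ∈ H) {a b : V} (q : G.Walk a b) (hq : q.IsPath) (hb : b ∈ H) :
    ∃ c ∈ H, ∃ r : G.Walk a c, r.IsPath ∧ r.edges.Sublist q.edges ∧ (∀ e ∈ r.edges, e ∉ F) ∧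
      ∀ x ∈ r.support, x ∈ q.support := by
  induction q with
  | @nil a => exact ⟨a, hb, .nil, by simp⟩
  | @cons a a' b hadj q ih =>
    by_cases ha : a ∈ H
    · exact ⟨a, ha, .nil, by simp⟩
    · rw [SimpleGraph.Walk.cons_isPath_iff] at hq
      obtain ⟨c, hc, r, hr, hs, hrF, hsup⟩ := ih hq.1 hb
      refine ⟨c, hc, .cons hadj r, ?_, ?_, ?_, ?_⟩
      · exact (SimpleGraph.Walk.cons_isPath_iff _ _).2 ⟨hr, fun h => hq.2 (hsup _ h)⟩
      · simpa using hs
      · intro e he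
        rcases List.mem_cons.1 (by simpa using he : e ∈ s(a, a') :: r.edges) with rfl | he
        · exact fun h => ha (hF _ _ h)
        · exact hrF e he
      · intro x hx
        rcases List.mem_cons.1 (by simpa using hx : x ∈ a :: r.support) with rfl | hx
        · simp
        · simp [hsup x hx]

/-- A path with both endpoints in `H` that uses some edge outside `F` contains a nonempty
excursion: a subpath between vertices of `H` avoiding `F`. -/
lemma exists_excursion {V : Type*} {G : SimpleGraph V} (H : Set V) (F : Set (Sym2 V))
    (hF : ∀ x y, s(x, y) ∈ F → x ∈ H) {a b : V} (q : G.Walk a b) (hq : q.IsPath)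
    (ha : a ∈ H) (hb : b ∈ H) (hne : ∃ e ∈ q.edges, e ∉ F) :
    ∃ x ∈ H, ∃ y ∈ H, ∃ r : G.Walk x y, r.IsPath ∧ 1 ≤ r.length ∧ r.edges.Sublist q.edges ∧
      ∀ e ∈ r.edges, e ∉ F := by
  induction q with
  | nil => simp at hne
  | @cons a a' b hadj q ih =>
    rw [SimpleGraph.Walk.cons_isPath_iff] at hq
    by_cases hF' : s(a, a') ∈ F
    · obtain ⟨e, he, heF⟩ := hne
      have he : e ∈ q.edges := by
        rcases List.mem_cons.1 (by simpa using he : e ∈ s(a, a') :: q.edges) with rfl | he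
        · exact absurd hF' heF
        · exact he
      obtain ⟨x, hx, y, hy, r, h1, h2, h3, h4⟩ :=
        ih hq.1 (hF a' a (by rwa [Sym2.eq_swap])) hb ⟨e, he, heF⟩
      exact ⟨x, hx, y, hy, r, h1, h2, by simpa using h3.trans (List.sublist_cons_self _ _), h4⟩
    · obtain ⟨c, hc, r, hr, hs, hrF, hsup⟩ := exists_first_return H F hF q hq.1 hb
      refine ⟨a, ha, c, hc, .cons hadj r, ?_, by simp, by simpa using hs, ?_⟩
      · exact (SimpleGraph.Walk.cons_isPath_iff _ _).2 ⟨hr, fun h => hq.2 (hsup _ h)⟩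
      · intro e he
        rcases List.mem_cons.1 (by simpa using he : e ∈ s(a, a') :: r.edges) with rfl | he
        · exact hF'
        · exact hrF e he

/-- There are at most `|V| ^ l` walks of length `l + 1` between two given vertices, one for each
choice of the `l` inner vertices. -/
lemma card_finsetWalkLength_le {V : Type*} [Fintype V] [DecidableEq V] (G : SimpleGraph V)
    [DecidableRel G.Adj] (l : ℕ) (a b : V) :
    (G.finsetWalkLength (l + 1) a b).card ≤ Fintype.card V ^ l := by
  induction l generalizing a with
  | zero =>
    refine Finset.card_le_one.2 fun p hp q hq => ?_
    rw [SimpleGraph.mem_finsetWalkLength_iff] at hp hq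
    match p, q, hp, hq with
    | .cons _ .nil, .cons _ .nil, _, _ => rfl
  | succ l ih =>
    rw [SimpleGraph.finsetWalkLength]
    refine Finset.card_biUnion_le.trans ?_
    calc _ ≤ ∑ _w : G.neighborSet a, Fintype.card V ^ l := by
            refine Finset.sum_le_sum fun w _ => ?_
            rw [Finset.card_map]
            exact ih w
      _ ≤ _ := by
            rw [Finset.sum_const, smul_eq_mul, pow_succ', Finset.card_univ]
            exact Nat.mul_le_mul_right _ (Fintype.card_subtype_le _)

/-! ### Weights of paths in the complete graph -/

lemma edgeSpace_eq (n : ℕ) : edgeSpace n =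
    Measure.pi fun _ : Sym2 (Fin n) => expMeasure (1 / (n : ℝ)) := rfl

lemma walkWeight_eq_sum {n : ℕ} {a b : Fin n} (q : (Kn n).Walk a b) (hq : q.IsPath)
    (w : Sym2 (Fin n) → ℝ) : walkWeight w q = ∑ e ∈ q.edges.toFinset, w e := by
  rw [walkWeight, List.sum_toFinset w hq.isTrail.edges_nodup]

lemma measurable_walkWeight {n : ℕ} {a b : Fin n} (q : (Kn n).Walk a b) (hq : q.IsPath) :
    Measurable fun w => walkWeight w q := by
  simp only [walkWeight_eq_sum q hq]
  fun_prop

lemma edgeSpace_walkWeight_le {n : ℕ} (hn : 0 < n) {a b : Fin n} (q : (Kn n).Walk a b)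
    (hq : q.IsPath) (x : ℝ) (hx : 0 ≤ x) :
    edgeSpace n {w | walkWeight w q ≤ x}
      ≤ ENNReal.ofReal ((x / n) ^ q.length / q.length.factorial) := by
  have h := pi_expMeasure_sum_le (r := 1 / (n : ℝ)) (by positivity) q.edges.toFinset x hx
  rw [List.toFinset_card_of_nodup hq.isTrail.edges_nodup, SimpleGraph.Walk.length_edges] at h
  simp only [walkWeight_eq_sum q hq, edgeSpace_eq]
  rwa [one_div_mul_eq_div] at h

lemma indepFun_walkWeight {n : ℕ} (hn : 0 < n) {a b c d : Fin n} (p : (Kn n).Walk a b)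
    (q : (Kn n).Walk c d) (hp : p.IsPath) (hq : q.IsPath) (hpq : ∀ e ∈ q.edges, e ∉ p.edges) :
    IndepFun (fun w => walkWeight w p) (fun w => walkWeight w q) (edgeSpace n) := by
  have hd : Disjoint p.edges.toFinset q.edges.toFinset :=
    Finset.disjoint_left.2 fun e h1 h2 => hpq e (List.mem_toFinset.1 h2) (List.mem_toFinset.1 h1)
  have h := (iIndepFun_pi_expMeasure (ι := Sym2 (Fin n)) (r := 1 / (n : ℝ))
    (by positivity)).indepFun_finset _ _ hd (fun i => measurable_pi_apply i)
  have h2 := h.comp (φ := fun f => ∑ i, f i) (ψ := fun f => ∑ i, f i) (by fun_prop) (by fun_prop)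
  rw [edgeSpace_eq]
  convert h2 using 1
  · ext w
    rw [walkWeight_eq_sum p hp]
    exact (Finset.sum_coe_sort _ _).symm
  · ext w
    rw [walkWeight_eq_sum q hq]
    exact (Finset.sum_coe_sort _ _).symm

/-- Conditioning on the weight of `p` does not increase the probability that an edge-disjoint path
is light; it changes nothing, unless the conditioning event is null. -/
lemma cond_walkWeight_le {n : ℕ} (hn : 0 < n) {a b c d : Fin n} (p : (Kn n).Walk a b)
    (q : (Kn n).Walk c d) (hp : p.IsPath) (hq : q.IsPath) (hpq : ∀ e ∈ q.edges, e ∉ p.edges)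
    (I : Set ℝ) (hI : MeasurableSet I) (x : ℝ) :
    (edgeSpace n)[|(fun w => walkWeight w p) ⁻¹' I] {w | walkWeight w q ≤ x}
      ≤ edgeSpace n {w | walkWeight w q ≤ x} := by
  rw [cond_apply (measurable_walkWeight p hp hI)]
  have h := (indepFun_walkWeight hn p q hp hq hpq).measure_inter_preimage_eq_mul I (Set.Iic x) hI
    measurableSet_Iic
  change _ * edgeSpace n (_ ∩ (fun w => walkWeight w q) ⁻¹' Set.Iic x)
    ≤ edgeSpace n ((fun w => walkWeight w q) ⁻¹' Set.Iic x)
  rw [h, ← mul_assoc]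
  exact mul_le_of_le_one_left' (ENNReal.inv_mul_le_one _)

lemma sum_pow_mul_le {n : ℕ} (hn : 0 < n) (x : ℝ) (hx : 0 ≤ x) :
    ∑ l ∈ Finset.range n, (n : ℝ) ^ l * ((x / n) ^ (l + 1) / (l + 1).factorial)
      ≤ Real.exp x / n := by
  have hn' : (n : ℝ) ≠ 0 := by positivity
  have h := Real.sum_le_exp_of_nonneg hx (n + 1)
  rw [Finset.sum_range_succ'] at h
  rw [le_div_iff₀ (by positivity), Finset.sum_mul]
  refine le_trans (le_of_eq ?_) ((le_add_of_nonneg_right (by simp)).trans h)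
  refine Finset.sum_congr rfl fun l _ => ?_
  rw [div_pow]
  field_simp
  ring

/-- Fix `c > 2`. For all sufficiently large `n`, every `ε` with
`c log log n / log n < ε < 1/2`, and every path `P = (v_1,…,v_{k+1})` in `K_n` with
`1 ≤ k ≤ 12 log n`: conditionally on `(1−2ε) log n ≤ w(P) ≤ (1−ε) log n`, the
probability that `P` is not the minimum-weight path between its endpoints is at most
`13 k² / n^ε`. -/
theorem stmt11 (c : ℝ) (hc : 2 < c) :
    ∃ N : ℕ, ∀ n : ℕ, N ≤ n →
      ∀ ε : ℝ, c * Real.log (Real.log n) / Real.log n < ε → ε < 1 / 2 →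
      ∀ (u v : Fin n) (p : (Kn n).Walk u v), p.IsPath →
        1 ≤ p.length → (p.length : ℝ) ≤ 12 * Real.log n →
        (edgeSpace n)[|{w | (1 - 2 * ε) * Real.log n ≤ walkWeight w p ∧
              walkWeight w p ≤ (1 - ε) * Real.log n}]
            {w | ∃ q : (Kn n).Walk u v, q.IsPath ∧ q ≠ p ∧
              walkWeight w q ≤ walkWeight w p} ≤
          ENNReal.ofReal (13 * (p.length : ℝ) ^ 2 / (n : ℝ) ^ ε) := by
  classical
  refine ⟨0, fun n _ ε _ hε u v p hp hk _ => ?_⟩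
  have hn : 0 < n := u.pos
  have hn1 : (1 : ℝ) ≤ n := by exact_mod_cast hn
  set x : ℝ := (1 - ε) * Real.log n with hx
  have hx0 : 0 ≤ x := mul_nonneg (by linarith) (Real.log_nonneg hn1)
  set I : Set ℝ := Set.Icc ((1 - 2 * ε) * Real.log n) x with hI
  change (edgeSpace n)[|(fun w => walkWeight w p) ⁻¹' I] _ ≤ _
  set ν := (edgeSpace n)[|(fun w => walkWeight w p) ⁻¹' I] with hν
  set H : Finset (Fin n) := p.support.toFinset with hH
  -- `T l a b`: the candidate excursions from `a` to `b` with `l + 1` edges.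
  set T : ℕ → (a b : Fin n) → Finset ((Kn n).Walk a b) := fun l a b =>
    ((Kn n).finsetWalkLength (l + 1) a b).filter
      fun q => q.IsPath ∧ ∀ e ∈ q.edges, e ∉ p.edges with hT
  have hsub : ν {w | ∃ q : (Kn n).Walk u v, q.IsPath ∧ q ≠ p ∧ walkWeight w q ≤ walkWeight w p}
      ≤ ν (⋃ a ∈ H, ⋃ b ∈ H, ⋃ l ∈ Finset.range n, ⋃ q ∈ T l a b,
          {w | walkWeight w q ≤ x}) := by
    refine measure_mono_ae ?_
    have hnn : ∀ᵐ w ∂ν, ∀ e, 0 ≤ w e := cond_absolutelyContinuous.ae_le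
      (pi_expMeasure_ae_nonneg (r := 1 / (n : ℝ)) (by positivity))
    have hmem : ∀ᵐ w ∂ν, walkWeight w p ∈ I :=
      ae_cond_mem (measurable_walkWeight p hp measurableSet_Icc)
    filter_upwards [hnn, hmem] with w hw hwI
    rintro ⟨q, hq, hqp, hle⟩
    have hne : ∃ e ∈ q.edges, e ∉ {e | e ∈ p.edges} := by
      by_contra! hcon
      exact hqp (isPath_eq_of_edges_subset p q hp hq hcon)
    obtain ⟨a, ha, b, hb, r, hr, hr1, hrs, hrp⟩ := exists_excursion {z | z ∈ p.support}
      {e | e ∈ p.edges} (fun y z h => p.fst_mem_support_of_mem_edges h) q hq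
      p.start_mem_support p.end_mem_support hne
    have hwr : walkWeight w r ≤ walkWeight w q :=
      (hrs.map w).sum_le_sum (by simpa using fun e _ => hw e)
    have hlt : r.length < n := by simpa using hr.length_lt
    change w ∈ ⋃ a ∈ H, ⋃ b ∈ H, ⋃ l ∈ Finset.range n, ⋃ q ∈ T l a b, {w | walkWeight w q ≤ x}
    simp only [Set.mem_iUnion]
    refine ⟨a, List.mem_toFinset.2 ha, b, List.mem_toFinset.2 hb, r.length - 1,
      Finset.mem_range.2 (by omega), r, ?_, (hwr.trans hle).trans hwI.2⟩
    refine Finset.mem_filter.2 ⟨SimpleGraph.mem_finsetWalkLength_iff.2 (by omega), hr, hrp⟩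
  have hpair : ∀ a b : Fin n, ν (⋃ l ∈ Finset.range n, ⋃ q ∈ T l a b, {w | walkWeight w q ≤ x})
      ≤ ENNReal.ofReal (Real.exp x / n) := by
    intro a b
    calc ν (⋃ l ∈ Finset.range n, ⋃ q ∈ T l a b, {w | walkWeight w q ≤ x})
        ≤ ∑ l ∈ Finset.range n, ∑ q ∈ T l a b, ν {w | walkWeight w q ≤ x} :=
          (measure_biUnion_finset_le _ _).trans
            (Finset.sum_le_sum fun l _ => measure_biUnion_finset_le _ _)
      _ ≤ ∑ l ∈ Finset.range n,
            ENNReal.ofReal ((n : ℝ) ^ l * ((x / n) ^ (l + 1) / (l + 1).factorial)) := by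
          refine Finset.sum_le_sum fun l _ => ?_
          refine (Finset.sum_le_card_nsmul _ _
            (ENNReal.ofReal ((x / n) ^ (l + 1) / (l + 1).factorial)) fun q hq => ?_).trans ?_
          · obtain ⟨hl, hq, hqp⟩ := Finset.mem_filter.1 hq
            rw [SimpleGraph.mem_finsetWalkLength_iff] at hl
            rw [← hl]
            exact (cond_walkWeight_le hn p q hp hq hqp I measurableSet_Icc x).trans
              (edgeSpace_walkWeight_le hn q hq x hx0)
          · rw [nsmul_eq_mul, ENNReal.ofReal_mul (by positivity), ← Nat.cast_pow,
              ENNReal.ofReal_natCast]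
            gcongr
            refine (Finset.card_filter_le _ _).trans ?_
            simpa using card_finsetWalkLength_le (Kn n) l a b
      _ = ENNReal.ofReal (∑ l ∈ Finset.range n,
            (n : ℝ) ^ l * ((x / n) ^ (l + 1) / (l + 1).factorial)) :=
          (ENNReal.ofReal_sum_of_nonneg fun l _ => by positivity).symm
      _ ≤ _ := ENNReal.ofReal_le_ofReal (sum_pow_mul_le hn x hx0)
  have hcard : H.card ≤ p.length + 1 := by
    simpa using List.toFinset_card_le p.support
  have hexp : Real.exp x / n = 1 / (n : ℝ) ^ ε := by
    have hn0 : (0 : ℝ) < n := by positivity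
    rw [hx, mul_comm, ← Real.rpow_def_of_pos hn0, Real.rpow_sub hn0, Real.rpow_one]
    field_simp
  calc _ ≤ _ := hsub
    _ ≤ ∑ a ∈ H, ∑ b ∈ H, ENNReal.ofReal (Real.exp x / n) :=
        (measure_biUnion_finset_le _ _).trans (Finset.sum_le_sum fun a _ =>
          (measure_biUnion_finset_le _ _).trans (Finset.sum_le_sum fun b _ => hpair a b))
    _ = ENNReal.ofReal ((H.card : ℝ) * (H.card * (Real.exp x / n))) := by
        simp [ENNReal.ofReal_mul]
    _ ≤ _ := by
        refine ENNReal.ofReal_le_ofReal ?_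
        have h1 : (H.card : ℝ) ≤ p.length + 1 := by exact_mod_cast hcard
        have h2 : (1 : ℝ) ≤ p.length := by exact_mod_cast hk
        have h3 : (H.card : ℝ) * H.card ≤ 13 * (p.length : ℝ) ^ 2 := by
          nlinarith [mul_self_le_mul_self (Nat.cast_nonneg H.card) h1]
        rw [hexp, ← mul_assoc, mul_one_div]
        gcongr
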